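/- arXiv:1805.08181 — 2 statements merged into one kernel-verified Lean document; each statement's English description precedes it below -/
import Mathlib

section
/- Let K be a field, let M be a d×n matrix over K of rank d, and let C ⊆ ℝⁿ be a matroidal cone. Let L be the field of rational functions over K in one indeterminate λ_{i,k} for each ordered pair (i,k) with 1 ≤ i,k ≤ n, i ≠ k, and e_k − e_i ∈ C. Let B be the n×n matrix over L with B_{i,k} = λ_{i,k} if i ≠ k and e_k − e_i ∈ C, and B_{i,k} = 0 otherwise, and let N = M·(1ₙ + t·B), a d×n matrix with entries in the polynomial ring L[t]. Then for every d-element subset z ⊆ {1,…,n}, the t-adic order ord_t det(N^z) (the largest m such that t^m divides det(N^z) in L[t], with ord_t 0 = ∞) equals the minimum of |z ∖ w| over all pairs (w, φ) where w ⊆ {1,…,n} is a d-element subset whose columns in M are linearly independent and φ : z ∖ w → w ∖ z is a bijection satisfying e_k − e_{φ(k)} ∈ C for all k ∈ z ∖ w; in particular ord_t det(N^z) = ∞ exactly when no such pair (w, φ) exists. Here N^z denotes the d×d submatrix of N with columns indexed by z. -/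
open scoped Classical

noncomputable section

/-- The standard basis vector `eᵢ` of `ℝⁿ`. -/
def eVec (n : ℕ) (i : Fin n) : Fin n → ℝ := Pi.single i 1

/-- A matroidal cone in `ℝⁿ`: the convex cone generated by finitely many vectors of the
form `eᵢ − eⱼ` with `i ≠ j`. -/
def IsMatroidalCone {n : ℕ} (C : Set (Fin n → ℝ)) : Prop :=
  ∃ S : Finset (Fin n × Fin n), (∀ p ∈ S, p.1 ≠ p.2) ∧
    C = {x | ∃ c : Fin n × Fin n → ℝ, (∀ p, 0 ≤ c p) ∧
      x = ∑ p ∈ S, c p • (eVec n p.1 - eVec n p.2)}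

/-- Index type of the indeterminates `λ_{i,k}`: ordered pairs `(i,k)` with `i ≠ k` and
`e_k − e_i ∈ C`. -/
def ConeIdx (n : ℕ) (C : Set (Fin n → ℝ)) : Type :=
  {p : Fin n × Fin n // p.1 ≠ p.2 ∧ eVec n p.2 - eVec n p.1 ∈ C}

/-- The field of rational functions over `K` in the indeterminates `λ_{i,k}`. -/
abbrev LField (K : Type*) [Field K] (n : ℕ) (C : Set (Fin n → ℝ)) : Type _ :=
  FractionRing (MvPolynomial (ConeIdx n C) K)

/-- The `n × n` matrix `B` with `B_{i,k} = λ_{i,k}` when `i ≠ k` and `e_k − e_i ∈ C`,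
and `B_{i,k} = 0` otherwise. -/
def Bmat (K : Type*) [Field K] (n : ℕ) (C : Set (Fin n → ℝ)) :
    Matrix (Fin n) (Fin n) (LField K n C) :=
  Matrix.of fun i k =>
    if h : i ≠ k ∧ eVec n k - eVec n i ∈ C then
      algebraMap (MvPolynomial (ConeIdx n C) K) (LField K n C)
        (MvPolynomial.X (⟨(i, k), h⟩ : ConeIdx n C))
    else 0

/-- The matrix `N = M · (1ₙ + t·B)` over the polynomial ring `L[t]`. -/
def Nmat {K : Type*} [Field K] {d n : ℕ} (M : Matrix (Fin d) (Fin n) K)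
    (C : Set (Fin n → ℝ)) : Matrix (Fin d) (Fin n) (Polynomial (LField K n C)) :=
  (M.map fun a =>
      Polynomial.C (algebraMap (MvPolynomial (ConeIdx n C) K) (LField K n C)
        (MvPolynomial.C a))) *
    (1 + Matrix.of fun i k => Polynomial.X * Polynomial.C (Bmat K n C i k))

/-- The `t`-adic order of a polynomial: the largest `m` such that `t^m` divides it,
with `ord_t 0 = ∞`. -/
def ordT {L : Type*} [Field L] (p : Polynomial L) : ℕ∞ :=
  sSup {m : ℕ∞ | ∃ k : ℕ, m = (k : ℕ∞) ∧ Polynomial.X ^ k ∣ p}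

/-- Multilinear expansion of a column minor of a product. -/
theorem det_minor_expand {A : Type*} [CommRing A] {d n : ℕ} (M : Matrix (Fin d) (Fin n) A)
    (Q : Matrix (Fin n) (Fin n) A) (g : Fin d → Fin n) :
    ((M * Q).submatrix id g).det =
      ∑ f : Fin d → Fin n, (∏ j, Q (f j) (g j)) * (M.submatrix id f).det := by
  rw [← Matrix.det_transpose]
  have h1 : ((M * Q).submatrix id g).transpose =
      fun j => ∑ i : Fin n, Q i (g j) • (M.transpose i) := by
    ext j r
    simp [Matrix.mul_apply, Finset.sum_apply, mul_comm]
  rw [h1]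
  have h2 := (Matrix.detRowAlternating (R := A) (n := Fin d)).toMultilinearMap.map_sum
    (fun j (i : Fin n) => Q i (g j) • (M.transpose i))
  refine h2.trans (Finset.sum_congr rfl fun f _ => ?_)
  have h3 := (Matrix.detRowAlternating (R := A) (n := Fin d)).toMultilinearMap.map_smul_univ
    (fun j => Q (f j) (g j)) (fun j => M.transpose (f j))
  refine h3.trans ?_
  rw [smul_eq_mul, ← Matrix.det_transpose (M.submatrix id f)]
  rfl

theorem cone_zero {n : ℕ} {C : Set (Fin n → ℝ)} (hC : IsMatroidalCone C) :
    (0 : Fin n → ℝ) ∈ C := by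
  obtain ⟨S, -, rfl⟩ := hC
  exact ⟨0, by simp, by simp⟩

theorem cone_trans {n : ℕ} {C : Set (Fin n → ℝ)} (hC : IsMatroidalCone C) {a b c : Fin n}
    (h1 : eVec n a - eVec n b ∈ C) (h2 : eVec n b - eVec n c ∈ C) :
    eVec n a - eVec n c ∈ C := by
  obtain ⟨S, -, rfl⟩ := hC
  obtain ⟨u, hu, hu'⟩ := h1
  obtain ⟨v, hv, hv'⟩ := h2
  refine ⟨u + v, fun p => add_nonneg (hu p) (hv p), ?_⟩
  simp only [Pi.add_apply, add_smul, Finset.sum_add_distrib]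
  rw [← hu', ← hv']
  abel

/-- A bijection `z → w` respecting a preorder yields one `z \ w → w \ z`. -/
theorem exists_matching {n : ℕ} (r : Fin n → Fin n → Prop)
    (htr : ∀ a b c, r a b → r b c → r a c) (hrefl : ∀ a, r a a)
    (z w : Finset (Fin n)) (hzw : z.card = w.card)
    (σ₀ : z ≃ w) (h₀ : ∀ k : z, r (k : Fin n) (σ₀ k : Fin n)) :
    ∃ φ : (z \ w : Finset (Fin n)) ≃ (w \ z : Finset (Fin n)),
      ∀ k : (z \ w : Finset (Fin n)), r (k : Fin n) (φ k : Fin n) := by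
  let T := {σ : z ≃ w // ∀ k : z, r (k : Fin n) (σ k : Fin n)}
  have : Nonempty T := ⟨⟨σ₀, h₀⟩⟩
  let fx : T → ℕ := fun σ =>
    (Finset.univ.filter fun k : z => ((σ.1 k : Fin n)) = (k : Fin n)).card
  obtain ⟨⟨σ, hσ⟩, hmax⟩ := Finite.exists_max fx
  have hfix : ∀ k : z, (k : Fin n) ∈ w → (σ k : Fin n) = k := by
    intro k hk
    by_contra hne
    obtain ⟨l, hl⟩ := σ.surjective ⟨k, hk⟩
    have hl' : (σ l : Fin n) = k := by rw [hl]
    have hlk : l ≠ k := by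
      rintro rfl
      exact hne hl'
    let σ' : z ≃ w := (Equiv.swap l k).trans σ
    have hk' : (σ' k : Fin n) = k := by simp [σ', hl']
    have hl2 : (σ' l : Fin n) = σ k := by simp [σ']
    have ho : ∀ x, x ≠ l → x ≠ k → σ' x = σ x := by
      intro x h1 h2
      simp [σ', Equiv.swap_apply_of_ne_of_ne h1 h2]
    have hσ' : ∀ x : z, r (x : Fin n) (σ' x : Fin n) := by
      intro x
      by_cases h1 : x = l
      · subst h1
        rw [hl2]
        refine htr _ _ _ (hσ x) ?_
        rw [hl']
        exact hσ k
      · by_cases h2 : x = k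
        · subst h2
          rw [hk']
          exact hrefl _
        · rw [ho x h1 h2]
          exact hσ x
    have := hmax ⟨σ', hσ'⟩
    refine absurd this (not_le.mpr (Finset.card_lt_card ?_))
    rw [Finset.ssubset_iff]
    refine ⟨k, by simpa using hne, ?_⟩
    intro x hx
    simp only [Finset.mem_insert, Finset.mem_filter, Finset.mem_univ, true_and] at hx ⊢
    rcases hx with rfl | hx
    · exact hk'
    · have h2 : x ≠ k := by
        rintro rfl
        exact hne hx
      have h1 : x ≠ l := by
        rintro rfl
        exact hlk (Subtype.ext (hx.symm.trans hl'))
      rw [ho x h1 h2]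
      exact hx
  have hmem : ∀ k : (z \ w : Finset (Fin n)),
      (σ ⟨k, (Finset.mem_sdiff.mp k.2).1⟩ : Fin n) ∈ w \ z := by
    intro k
    rw [Finset.mem_sdiff]
    refine ⟨(σ _).2, fun hz => ?_⟩
    have h1 := hfix ⟨_, hz⟩ (σ _).2
    have h2 : σ ⟨_, hz⟩ = σ ⟨k, (Finset.mem_sdiff.mp k.2).1⟩ := Subtype.ext h1
    have h3 := congrArg Subtype.val (σ.injective h2)
    apply (Finset.mem_sdiff.mp k.2).2
    simp only at h3
    rw [← h3]
    exact (σ _).2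
  let ψ : (z \ w : Finset (Fin n)) → (w \ z : Finset (Fin n)) := fun k => ⟨_, hmem k⟩
  have hψ : Function.Bijective ψ := by
    rw [Fintype.bijective_iff_injective_and_card]
    constructor
    · intro a b hab
      have h1 := congrArg Subtype.val hab
      have h2 := congrArg Subtype.val (σ.injective (Subtype.ext h1))
      exact Subtype.ext h2
    · simp only [Fintype.card_coe]
      exact Finset.card_sdiff_comm hzw
  exact ⟨Equiv.ofBijective ψ hψ, fun k => hσ ⟨k, (Finset.mem_sdiff.mp k.2).1⟩⟩

/-- Polynomial-ring model of `B`. -/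
def BmatR (K : Type*) [Field K] (n : ℕ) (C : Set (Fin n → ℝ)) :
    Matrix (Fin n) (Fin n) (MvPolynomial (ConeIdx n C) K) :=
  Matrix.of fun i k =>
    if h : i ≠ k ∧ eVec n k - eVec n i ∈ C then
      (MvPolynomial.X (R := K) (σ := ConeIdx n C) ⟨(i, k), h⟩ : MvPolynomial (ConeIdx n C) K)
    else 0

/-- Polynomial-ring model of `N`. -/
def NmatR {K : Type*} [Field K] {d n : ℕ} (M : Matrix (Fin d) (Fin n) K)
    (C : Set (Fin n → ℝ)) :
    Matrix (Fin d) (Fin n) (Polynomial (MvPolynomial (ConeIdx n C) K)) :=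
  (M.map (fun a => Polynomial.C (MvPolynomial.C a)) :
      Matrix (Fin d) (Fin n) (Polynomial (MvPolynomial (ConeIdx n C) K))) *
    (1 + Matrix.of (fun i k => Polynomial.X * Polynomial.C (BmatR K n C i k)) :
      Matrix (Fin n) (Fin n) (Polynomial (MvPolynomial (ConeIdx n C) K)))

theorem Nmat_eq_map {K : Type*} [Field K] {d n : ℕ} (M : Matrix (Fin d) (Fin n) K)
    (C : Set (Fin n → ℝ)) :
    Nmat M C = (NmatR M C).map (Polynomial.mapRingHom
      (algebraMap (MvPolynomial (ConeIdx n C) K) (LField K n C))) := by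
  have h0 : Nmat M C = (M.map (fun a => Polynomial.C (algebraMap
        (MvPolynomial (ConeIdx n C) K) (LField K n C) (MvPolynomial.C a))) :
        Matrix (Fin d) (Fin n) (Polynomial (LField K n C))) *
      (1 + Matrix.of (fun i k => Polynomial.X * Polynomial.C (Bmat K n C i k)) :
        Matrix (Fin n) (Fin n) (Polynomial (LField K n C))) := rfl
  rw [h0, NmatR, Matrix.map_mul]
  congr 1
  · ext i j
    simp
  · refine Matrix.ext fun i k => ?_
    simp only [Matrix.add_apply, Matrix.of_apply, Matrix.map_apply, Bmat, BmatR,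
      Matrix.one_apply, Polynomial.coe_mapRingHom]
    split_ifs <;> simp

theorem NmatR_eval {K : Type*} [Field K] {d n : ℕ} (M : Matrix (Fin d) (Fin n) K)
    (C : Set (Fin n → ℝ)) (b : Fin n → Fin n → K)
    (hb : ∀ i k, b i k ≠ 0 → i ≠ k ∧ eVec n k - eVec n i ∈ C) :
    (NmatR M C).map (Polynomial.mapRingHom
      (MvPolynomial.eval (fun p : ConeIdx n C => b p.1.1 p.1.2))) =
    (M.map Polynomial.C) * (1 + Matrix.of fun i k => Polynomial.X * Polynomial.C (b i k)) := by
  rw [NmatR, Matrix.map_mul]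
  congr 1
  · ext i j
    simp
  · refine Matrix.ext fun i k => ?_
    have key : MvPolynomial.eval (fun p : ConeIdx n C => b p.1.1 p.1.2) (BmatR K n C i k)
        = b i k := by
      rw [BmatR, Matrix.of_apply]
      split_ifs with h
      · exact MvPolynomial.eval_X _
      · rw [map_zero]
        by_contra h'
        exact h (hb i k (Ne.symm h'))
    simp only [Matrix.add_apply, Matrix.of_apply, Matrix.map_apply,
      Matrix.one_apply, Polynomial.coe_mapRingHom]
    split_ifs <;> simp [key]

theorem X_pow_dvd_map_inj {A B : Type*} [CommRing A] [CommRing B] (f : A →+* B)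
    (hf : Function.Injective f) (p : Polynomial A) (k : ℕ)
    (h : Polynomial.X ^ k ∣ p.map f) : Polynomial.X ^ k ∣ p := by
  rw [Polynomial.X_pow_dvd_iff] at h ⊢
  intro m hm
  have := h m hm
  rw [Polynomial.coeff_map] at this
  exact (map_eq_zero_iff f hf).mp this

theorem upper_bound {K : Type*} [Field K] {d n : ℕ}
    (M : Matrix (Fin d) (Fin n) K)
    (C : Set (Fin n → ℝ))
    (z : Finset (Fin n)) (g : Fin d ≃ z) (k : ℕ)
    (hk : Polynomial.X ^ k ∣ ((Nmat M C).submatrix id (fun i => (g i : Fin n))).det)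
    (w : Finset (Fin n))
    (hli : LinearIndependent K (fun i : w => M.transpose (i : Fin n)))
    (φ : (z \ w : Finset (Fin n)) ≃ (w \ z : Finset (Fin n)))
    (hφ : ∀ k : (z \ w : Finset (Fin n)),
          eVec n (k : Fin n) - eVec n ((φ k : Fin n)) ∈ C) :
    k ≤ (z \ w).card := by
  let b : Fin n → Fin n → K := fun i k =>
    if ∃ hk : k ∈ z \ w, (φ ⟨k, hk⟩ : Fin n) = i then 1 else 0
  have hb : ∀ i k, b i k ≠ 0 → i ≠ k ∧ eVec n k - eVec n i ∈ C := by
    intro i k h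
    have h' : ∃ hk : k ∈ z \ w, (φ ⟨k, hk⟩ : Fin n) = i := by
      by_contra h'
      exact h (if_neg h')
    obtain ⟨hk, rfl⟩ := h'
    refine ⟨fun h => ?_, hφ ⟨k, hk⟩⟩
    have h1 := (Finset.mem_sdiff.mp (φ ⟨k, hk⟩).2).1
    rw [h] at h1
    exact (Finset.mem_sdiff.mp hk).2 h1
  rw [Nmat_eq_map, Matrix.submatrix_map] at hk
  have hk1 : Polynomial.X ^ k ∣ ((NmatR M C).submatrix id (fun i => (g i : Fin n))).det := by
    refine X_pow_dvd_map_inj (algebraMap (MvPolynomial (ConeIdx n C) K) (LField K n C))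
      (IsFractionRing.injective _ _) _ k ?_
    have := (RingHom.map_det (Polynomial.mapRingHom
      (algebraMap (MvPolynomial (ConeIdx n C) K) (LField K n C)))
      ((NmatR M C).submatrix id (fun i => (g i : Fin n))))
    rw [Polynomial.coe_mapRingHom] at this
    rw [this]
    exact hk
  have hk2 := map_dvd (Polynomial.mapRingHom
      (MvPolynomial.eval (fun p : ConeIdx n C => b p.1.1 p.1.2))) hk1
  rw [RingHom.map_det, RingHom.mapMatrix_apply, ← Matrix.submatrix_map, NmatR_eval M C b hb,
    map_pow, Polynomial.coe_mapRingHom, Polynomial.map_X, det_minor_expand,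
    Polynomial.X_pow_dvd_iff] at hk2
  by_contra hlt
  have h0 := hk2 _ (not_le.mp hlt)
  -- the distinguished column choice
  let f0 : Fin d → Fin n := fun j =>
    if h : (g j : Fin n) ∈ z \ w then (φ ⟨g j, h⟩ : Fin n) else g j
  have hf0w : ∀ j, f0 j ∈ w := by
    intro j
    by_cases h : (g j : Fin n) ∈ z \ w
    · simp only [f0, dif_pos h]
      exact (Finset.mem_sdiff.mp (φ _).2).1
    · simp only [f0, dif_neg h]
      by_contra h'
      exact h (Finset.mem_sdiff.mpr ⟨(g j).2, h'⟩)
  have hf0z : ∀ j, (g j : Fin n) ∈ z \ w → f0 j ∉ z := by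
    intro j h
    simp only [f0, dif_pos h]
    exact (Finset.mem_sdiff.mp (φ _).2).2
  have hf0z' : ∀ j, (g j : Fin n) ∉ z \ w → f0 j = g j := by
    intro j h
    simp only [f0, dif_neg h]
  have hf0inj : Function.Injective f0 := by
    intro i j hij
    by_cases hi : (g i : Fin n) ∈ z \ w <;> by_cases hj : (g j : Fin n) ∈ z \ w
    · simp only [f0, dif_pos hi, dif_pos hj] at hij
      have := congrArg Subtype.val (φ.injective (Subtype.ext hij))
      exact g.injective (Subtype.ext this)
    · exact absurd (by rw [hij, hf0z' j hj]; exact (g j).2) (hf0z i hi)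
    · exact absurd (by rw [← hij, hf0z' i hi]; exact (g i).2) (hf0z j hj)
    · rw [hf0z' i hi, hf0z' j hj] at hij
      exact g.injective (Subtype.ext hij)
  have hdet : (M.submatrix id f0).det ≠ 0 := by
    have hl : LinearIndependent K (fun j : Fin d => M.transpose (f0 j)) :=
      hli.comp (fun j : Fin d => (⟨f0 j, hf0w j⟩ : w))
        (fun i j hij => hf0inj (congrArg Subtype.val hij))
    have hl2 : LinearIndependent K (M.submatrix id f0).col := hl
    rw [Matrix.linearIndependent_cols_iff_isUnit, Matrix.isUnit_iff_isUnit_det] at hl2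
    exact hl2.ne_zero
  have hcard : (Finset.univ.filter fun j : Fin d => (g j : Fin n) ∈ z \ w).card
      = (z \ w).card := by
    refine Finset.card_bij (fun j _ => (g j : Fin n)) ?_ ?_ ?_
    · intro j hj
      exact (Finset.mem_filter.mp hj).2
    · intro i _ j _ h
      exact g.injective (Subtype.ext h)
    · intro x hx
      refine ⟨g.symm ⟨x, (Finset.mem_sdiff.mp hx).1⟩, ?_, by simp⟩
      simpa using (Finset.mem_sdiff.mp hx).2
  -- entries
  have hent : ∀ i j, (1 + Matrix.of fun i k => Polynomial.X * Polynomial.C (b i k) :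
      Matrix (Fin n) (Fin n) (Polynomial K)) i (g j) =
      if (g j : Fin n) ∈ z \ w then
        (if i = g j then 1 else if i = f0 j then Polynomial.X else 0)
      else (if i = f0 j then 1 else 0) := by
    intro i j
    rw [Matrix.add_apply, Matrix.one_apply, Matrix.of_apply]
    by_cases h : (g j : Fin n) ∈ z \ w
    · have e1 : b i (g j) = if i = f0 j then 1 else 0 := by
        simp only [b, f0, dif_pos h]
        refine if_congr ⟨?_, ?_⟩ rfl rfl
        · rintro ⟨_, h'⟩
          exact h'.symm
        · intro h'
          exact ⟨h, h'.symm⟩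
      rw [if_pos h, e1]
      by_cases h1 : i = g j
      · have h2 : i ≠ f0 j := by
          rintro rfl
          exact hf0z j h (by rw [h1]; exact (g j).2)
        rw [if_pos h1, if_pos h1, if_neg h2]
        simp
      · rw [if_neg h1, if_neg h1]
        split_ifs <;> simp
    · have e1 : b i (g j) = 0 := by
        refine if_neg ?_
        rintro ⟨h', _⟩
        exact h h'
      rw [if_neg h, e1, hf0z' j h]
      simp
  simp only [hent] at h0
  rw [Polynomial.finsetSum_coeff, Finset.sum_eq_single f0] at h0
  · have hp : (∏ j : Fin d, (if (g j : Fin n) ∈ z \ w then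
        (if f0 j = g j then 1 else if f0 j = f0 j then (Polynomial.X : Polynomial K) else 0)
      else (if f0 j = f0 j then 1 else 0))) = Polynomial.X ^ (z \ w).card := by
      rw [← hcard, ← Finset.prod_const, Finset.prod_filter]
      refine Finset.prod_congr rfl fun j _ => ?_
      by_cases h : (g j : Fin n) ∈ z \ w
      · have h2 : f0 j ≠ g j := fun h' => hf0z j h (by rw [h']; exact (g j).2)
        simp only [if_pos h, if_neg h2, if_true]
      · simp only [if_neg h, if_true]
    have hd : ((M.map Polynomial.C).submatrix id f0).det =
        Polynomial.C ((M.submatrix id f0).det) := by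
      rw [RingHom.map_det]
      rfl
    rw [hp, hd, mul_comm, Polynomial.coeff_C_mul, Polynomial.coeff_X_pow_self, mul_one] at h0
    exact hdet h0
  · intro f _ hf
    have hd : ((M.map Polynomial.C).submatrix id f).det =
        Polynomial.C ((M.submatrix id f).det) := by
      rw [RingHom.map_det]
      rfl
    rw [hd, Polynomial.coeff_mul_C]
    refine mul_eq_zero_of_left ?_ _
    obtain ⟨j0, hj0⟩ := Function.ne_iff.mp hf
    by_cases hj : (g j0 : Fin n) ∈ z \ w ∧ f j0 = g j0
    · apply Polynomial.coeff_eq_zero_of_natDegree_lt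
      refine (Polynomial.natDegree_prod_le _ _).trans_lt ?_
      rw [← hcard, Finset.card_filter]
      refine Finset.sum_lt_sum (fun j _ => ?_) ⟨j0, Finset.mem_univ _, ?_⟩
      · split_ifs <;> simp
      · rw [if_pos hj.1, if_pos hj.2, if_pos hj.1]
        simp
    · rw [Finset.prod_eq_zero (Finset.mem_univ j0)]
      · simp
      · by_cases h1 : (g j0 : Fin n) ∈ z \ w
        · rw [if_pos h1, if_neg (fun h => hj ⟨h1, h⟩), if_neg hj0]
        · rw [if_neg h1, if_neg hj0]
  · intro h
    exact absurd (Finset.mem_univ _) h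

theorem lower_bound {K : Type*} [Field K] {d n : ℕ}
    (M : Matrix (Fin d) (Fin n) K)
    (C : Set (Fin n → ℝ)) (hC : IsMatroidalCone C)
    (z : Finset (Fin n)) (g : Fin d ≃ z) (k : ℕ)
    (H : ∀ w : Finset (Fin n), w.card = d →
      LinearIndependent K (fun i : w => M.transpose (i : Fin n)) →
      ∀ φ : (z \ w : Finset (Fin n)) ≃ (w \ z : Finset (Fin n)),
      (∀ k : (z \ w : Finset (Fin n)),
          eVec n (k : Fin n) - eVec n ((φ k : Fin n)) ∈ C) → k ≤ (z \ w).card) :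
    Polynomial.X ^ k ∣ ((Nmat M C).submatrix id (fun i => (g i : Fin n))).det := by
  rw [Nmat, det_minor_expand]
  refine Finset.dvd_sum fun f _ => ?_
  by_cases hdet : (M.submatrix id f).det = 0
  · have : ((M.map fun a => Polynomial.C (algebraMap (MvPolynomial (ConeIdx n C) K)
        (LField K n C) (MvPolynomial.C a))).submatrix id f).det = 0 := by
      have h := RingHom.map_det ((Polynomial.C).comp ((algebraMap (MvPolynomial (ConeIdx n C) K)
        (LField K n C)).comp MvPolynomial.C)) (M.submatrix id f)
      rw [hdet, map_zero] at h
      exact h.symm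
    rw [this, mul_zero]
    exact dvd_zero _
  have hl2 : LinearIndependent K (M.submatrix id f).col := by
    rw [Matrix.linearIndependent_cols_iff_isUnit, Matrix.isUnit_iff_isUnit_det]
    exact isUnit_iff_ne_zero.mpr hdet
  have hl : LinearIndependent K (fun j : Fin d => M.transpose (f j)) := hl2
  have hinj : Function.Injective f := by
    intro i j hij
    exact hl.injective (by simp only [hij])
  refine dvd_mul_of_dvd_left ?_ _
  by_cases hgood : ∀ j, f j = g j ∨ (f j ≠ g j ∧ eVec n (g j) - eVec n (f j) ∈ C)
  swap
  · push Not at hgood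
    obtain ⟨j, h1, h2⟩ := hgood
    rw [Finset.prod_eq_zero (Finset.mem_univ j)]
    · exact dvd_zero _
    · rw [Matrix.add_apply, Matrix.one_apply_ne h1, Matrix.of_apply, Bmat, Matrix.of_apply,
        dif_neg (fun h => h2 h.1 h.2)]
      simp
  let w : Finset (Fin n) := Finset.univ.image f
  have hwc : w.card = d := by
    rw [Finset.card_image_of_injective _ hinj]
    simp
  have hzc : z.card = d := by
    have := Fintype.card_congr g
    simpa using this.symm
  have hfw : ∀ j, f j ∈ w := fun j => Finset.mem_image_of_mem _ (Finset.mem_univ _)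
  let e : Fin d ≃ w := Equiv.ofBijective (fun j => ⟨f j, hfw j⟩) (by
    constructor
    · intro i j hij
      exact hinj (congrArg Subtype.val hij)
    · rintro ⟨x, hx⟩
      obtain ⟨j, -, rfl⟩ := Finset.mem_image.mp hx
      exact ⟨j, rfl⟩)
  have hliw : LinearIndependent K (fun i : w => M.transpose (i : Fin n)) :=
    (linearIndependent_equiv e).mp hl
  obtain ⟨φ, hφ⟩ := exists_matching (fun a b => eVec n a - eVec n b ∈ C)
    (fun a b c => cone_trans hC) (fun a => by rw [sub_self]; exact cone_zero hC)
    z w (hzc.trans hwc.symm) (g.symm.trans e) (by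
      intro (k : z)
      obtain ⟨j, rfl⟩ := g.surjective k
      have : ((g.symm.trans e) (g j) : Fin n) = f j := by
        rw [Equiv.trans_apply, Equiv.symm_apply_apply]
        rfl
      rw [this]
      rcases hgood j with h | h
      · rw [h, sub_self]
        exact cone_zero hC
      · exact h.2)
  have hkle := H w hwc hliw φ hφ
  have hle : (z \ w).card ≤ (Finset.univ.filter fun j : Fin d => f j ≠ g j).card := by
    refine (Finset.card_le_card (t := (Finset.univ.filter fun j : Fin d => f j ≠ g j).image
      (fun j => (g j : Fin n))) ?_).trans Finset.card_image_le
    intro x hx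
    rw [Finset.mem_sdiff] at hx
    refine Finset.mem_image.mpr ⟨g.symm ⟨x, hx.1⟩, ?_, by simp⟩
    simp only [Finset.mem_filter, Finset.mem_univ, true_and, Equiv.apply_symm_apply]
    intro h
    exact hx.2 (h ▸ hfw _)
  refine (pow_dvd_pow _ (hkle.trans hle)).trans ?_
  rw [← Finset.prod_const, Finset.prod_filter]
  refine Finset.prod_dvd_prod_of_dvd _ _ fun j _ => ?_
  split_ifs with h
  · rw [Matrix.add_apply, Matrix.one_apply_ne h, Matrix.of_apply, zero_add]
    exact dvd_mul_right _ _
  · exact one_dvd _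

/-- The `t`-adic order of the `d × d` minor of `N = M(1 + tB)` on a column set `z` equals
the minimal number of exchanges `|z ∖ w|` over column bases `w` of `M` admitting a
matching `φ : z ∖ w → w ∖ z` with `e_k − e_{φ(k)} ∈ C`. -/
theorem ordT_det_minor_eq_min_matching {K : Type*} [Field K] {d n : ℕ}
    (M : Matrix (Fin d) (Fin n) K) (hM : M.rank = d)
    (C : Set (Fin n → ℝ)) (hC : IsMatroidalCone C)
    (z : Finset (Fin n)) (hz : z.card = d) :
    ordT ((Nmat M C).submatrix id
        (fun i : Fin d => ((z.orderIsoOfFin hz i : ↥z) : Fin n))).det =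
    sInf {m : ℕ∞ | ∃ w : Finset (Fin n), w.card = d ∧
      LinearIndependent K (fun i : w => M.transpose (i : Fin n)) ∧
      ∃ φ : (z \ w : Finset (Fin n)) ≃ (w \ z : Finset (Fin n)),
        (∀ k : (z \ w : Finset (Fin n)),
          eVec n (k : Fin n) - eVec n ((φ k : Fin n)) ∈ C) ∧
        m = ((z \ w).card : ℕ∞)} := by
  let g : Fin d ≃ z := (z.orderIsoOfFin hz).toEquiv
  apply le_antisymm
  · refine sSup_le ?_
    rintro _ ⟨k, rfl, hk⟩
    refine le_sInf ?_
    rintro _ ⟨w, hw, hli, φ, hφ, rfl⟩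
    exact_mod_cast upper_bound M C z g k hk w hli φ hφ
  · refine ENat.forall_natCast_le_iff_le.mp fun k hk => ?_
    refine le_sSup ⟨k, rfl, ?_⟩
    refine lower_bound M C hC z g k fun w hw hli φ hφ => ?_
    exact_mod_cast hk.trans (sInf_le ⟨w, hw, hli, φ, hφ, rfl⟩)
end
end

section
/- Let K be a field and let M be a d×n matrix over K of rank d with no zero columns. Fix an integer r ≥ 0, let R = ℤ[t₀,…,t_r] and F(X) = ∏_{i=0}^r (X + tᵢ) ∈ R[X]. For each permutation σ of {1,…,n}, let B(σ) be the least d-element subset of {1,…,n}, in the lexicographic order on d-element subsets induced by the total order σ(1) ≺ σ(2) ≺ ⋯ ≺ σ(n), whose columns in M are linearly independent. Then the element ∑_{σ ∈ Sₙ} (∏_{i ∈ {1,…,n}∖B(σ)} F(zᵢ)) · ((z_{σ(2)} − z_{σ(1)})·(z_{σ(3)} − z_{σ(2)})⋯(z_{σ(n)} − z_{σ(n−1)}))^{-1} of the field of fractions of R[z₁,…,zₙ] lies in the subring R[z₁,…,zₙ], and as a polynomial it has degree at most r in each variable zᵢ. -/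
set_option synthInstance.maxHeartbeats 1000000
set_option maxHeartbeats 1000000

noncomputable section

/-- The strict lexicographic order on subsets of `{1,…,n}` induced by the total order
`σ(1) ≺ σ(2) ≺ ⋯ ≺ σ(n)`. -/
def lexLtPerm {n : ℕ} (σ : Equiv.Perm (Fin n)) (A B : Finset (Fin n)) : Prop :=
  List.Lex (· < ·) ((A.image σ.symm).sort (· ≤ ·)) ((B.image σ.symm).sort (· ≤ ·))

/-- The coefficient ring `R = ℤ[t₀,…,t_r]`. -/
abbrev Rring (r : ℕ) : Type := MvPolynomial (Fin (r + 1)) ℤ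

/-- The universal Leray relation `F(X) = ∏_{i=0}^r (X + tᵢ) ∈ R[X]`. -/
def Fpoly (r : ℕ) : Polynomial (Rring r) :=
  ∏ i : Fin (r + 1), (Polynomial.X + Polynomial.C (MvPolynomial.X i))

/-- The polynomial ring `S = R[z₁,…,zₙ]`. -/
abbrev Sring (r n : ℕ) : Type := MvPolynomial (Fin n) (Rring r)

set_option linter.unusedSectionVars false

namespace FinkAux
open MvPolynomial

section alg
variable {n : ℕ} {R : Type*} [CommRing R]

def den (R : Type*) [CommRing R] (σ : Equiv.Perm (Fin n)) : MvPolynomial (Fin n) R :=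
  ∏ k ∈ (Finset.range (n - 1)).attach,
                (MvPolynomial.X (σ ⟨k.1 + 1, by
                    have := Finset.mem_range.mp k.2; omega⟩) -
                  MvPolynomial.X (σ ⟨k.1, by
                    have := Finset.mem_range.mp k.2; omega⟩))

def mrg (i j : Fin n) (l : Fin n) : Fin n := if l = j then i else l

abbrev phi (R : Type*) [CommRing R] (i j : Fin n) : MvPolynomial (Fin n) R →ₐ[R] MvPolynomial (Fin n) R :=
  rename (mrg i j)

lemma dvd_sub_phi (i j : Fin n) (p : MvPolynomial (Fin n) R) :
    (X j - X i) ∣ p - phi R i j p := by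
  rw [← Ideal.mem_span_singleton, ← Ideal.Quotient.eq]
  have : (Ideal.Quotient.mkₐ R (Ideal.span {(X j - X i : MvPolynomial (Fin n) R)})) =
     (Ideal.Quotient.mkₐ R (Ideal.span {(X j - X i : MvPolynomial (Fin n) R)})).comp (phi R i j) := by
    apply MvPolynomial.algHom_ext
    intro l
    simp only [AlgHom.comp_apply, rename_X, mrg, Ideal.Quotient.mkₐ_eq_mk]
    split_ifs with h
    · rw [h, Ideal.Quotient.eq, Ideal.mem_span_singleton]
    · rfl
  exact DFunLike.congr_fun this p

lemma dvd_iff (i j : Fin n) (p : MvPolynomial (Fin n) R) :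
    (X j - X i) ∣ p ↔ phi R i j p = 0 := by
  constructor
  · rintro ⟨q, rfl⟩
    rw [map_mul]
    have : phi R i j (X j - X i) = 0 := by
      simp only [map_sub, rename_X, mrg]
      split_ifs <;> simp_all
    rw [this, zero_mul]
  · intro h
    simpa [h] using dvd_sub_phi i j p

variable [IsDomain R]

lemma X_sub_ne {i j : Fin n} (h : i ≠ j) : (X j - X i : MvPolynomial (Fin n) R) ≠ 0 := by
  rw [sub_ne_zero]
  intro h'
  exact h (X_injective h').symm

lemma prime_sub {i j : Fin n} (h : i ≠ j) : Prime (X j - X i : MvPolynomial (Fin n) R) := by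
  refine ⟨X_sub_ne h, ?_, ?_⟩
  · intro hu
    have h1 := (dvd_iff i j (1 : MvPolynomial (Fin n) R)).1 hu.dvd
    simp at h1
  · intro a b
    rw [dvd_iff, dvd_iff, dvd_iff, map_mul, mul_eq_zero]
    exact id

lemma phi_ne {i j k l : Fin n} (hkl : k ≠ l) (h1 : ¬ (k = i ∧ l = j))
    (h2 : ¬ (k = j ∧ l = i)) : phi R i j (X l - X k) ≠ 0 := by
  simp only [map_sub, rename_X]
  apply X_sub_ne
  simp only [mrg]
  split_ifs <;> grind

lemma relPrime {i j k l : Fin n} (hij : i ≠ j) (hkl : k ≠ l) (h1 : ¬ (k = i ∧ l = j))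
    (h2 : ¬ (k = j ∧ l = i)) :
    IsRelPrime (X j - X i : MvPolynomial (Fin n) R) (X l - X k) := by
  rw [(prime_sub hij).irreducible.isRelPrime_iff_not_dvd, dvd_iff]
  exact phi_ne hkl h1 h2

def DD (n : ℕ) (R : Type*) [CommRing R] : MvPolynomial (Fin n) R :=
  (Matrix.vandermonde (fun i : Fin n => (X i : MvPolynomial (Fin n) R))).det

lemma DD_eq : DD n R = ∏ x ∈ (Finset.univ : Finset (Fin n)).sigma (fun i => Finset.Ioi i),
    (X x.2 - X x.1) := by
  rw [DD, Matrix.det_vandermonde, Finset.prod_sigma]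

lemma DD_ne : DD n R ≠ 0 := by
  rw [DD_eq, Finset.prod_ne_zero_iff]
  intro x hx
  apply X_sub_ne
  simp at hx
  exact hx.ne

lemma dvd_DD {i j : Fin n} (h : i ≠ j) : (X j - X i) ∣ DD n R := by
  rw [DD_eq]
  rcases lt_or_gt_of_ne h with h | h
  · exact Finset.dvd_prod_of_mem (fun x : (Σ _ : Fin n, Fin n) => (X x.2 - X x.1 : MvPolynomial (Fin n) R))
      (a := ⟨i, j⟩) (by simpa using h)
  · rw [← neg_sub, neg_dvd]
    exact Finset.dvd_prod_of_mem (fun x : (Σ _ : Fin n, Fin n) => (X x.2 - X x.1 : MvPolynomial (Fin n) R))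
      (a := ⟨j, i⟩) (by simpa using h)

lemma DD_swap {i j : Fin n} (h : i ≠ j) : rename (Equiv.swap i j) (DD n R) = - DD n R := by
  have h1 := Matrix.det_permute (Equiv.swap i j)
    (Matrix.vandermonde (fun i : Fin n => (X i : MvPolynomial (Fin n) R)))
  rw [Equiv.Perm.sign_swap h] at h1
  have h2 : rename (Equiv.swap i j) (DD n R) = _ := AlgHom.map_det _ _
  rw [h2]
  simp only [Units.val_neg, Units.val_one, Int.cast_neg, Int.cast_one, neg_mul, one_mul] at h1
  rw [DD, ← h1]
  congr 1
  ext a b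
  simp [Matrix.vandermonde_apply]

lemma den_swap (σ τ : Equiv.Perm (Fin n)) : den R (τ * σ) = rename τ (den R σ) := by
  simp [den, map_prod]

lemma den_ne (σ : Equiv.Perm (Fin n)) : den R σ ≠ 0 := by
  rw [den, Finset.prod_ne_zero_iff]
  intro k _
  apply X_sub_ne
  simp

def Adj (σ : Equiv.Perm (Fin n)) (i j : Fin n) : Prop :=
  ∃ (k : ℕ) (hk : k + 1 < n), σ ⟨k, by omega⟩ = i ∧ σ ⟨k + 1, hk⟩ = j

variable [UniqueFactorizationMonoid R]

lemma den_dvd (σ : Equiv.Perm (Fin n)) : den R σ ∣ DD n R := by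
  apply Finset.prod_dvd_of_isRelPrime
  · intro a _ b _ hab
    have hab' : a.1 ≠ b.1 := fun h => hab (Subtype.ext h)
    apply relPrime
    · simp
    · simp
    all_goals
      simp only [EmbeddingLike.apply_eq_iff_eq, Fin.mk.injEq]
      omega
  · intro a _
    apply dvd_DD
    simp

theorem main_alg (N : Equiv.Perm (Fin n) → MvPolynomial (Fin n) R) (r : ℕ)
    (hN : ∀ σ i j, i ≠ j → (Adj σ i j ∨ Adj σ j i) →
      phi R i j (N (Equiv.swap i j * σ)) = phi R i j (N σ))
    (hdeg : ∀ σ i, degreeOf i (N σ) ≤ r + degreeOf i (den R σ)) :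
    ∃ p : MvPolynomial (Fin n) R, (∀ i : Fin n, p.degreeOf i ≤ r) ∧
      algebraMap _ (FractionRing (MvPolynomial (Fin n) R)) p =
       ∑ σ, algebraMap _ (FractionRing (MvPolynomial (Fin n) R)) (N σ) *
        (algebraMap _ (FractionRing (MvPolynomial (Fin n) R)) (den R σ))⁻¹ := by
  choose Q hQ using fun σ => den_dvd (R := R) (n := n) σ
  have hQ0 : ∀ σ, Q σ ≠ 0 := by
    intro σ h
    apply DD_ne (n := n) (R := R)
    rw [hQ σ, h, mul_zero]
  have hQs : ∀ σ i j, i ≠ j → phi R i j (Q (Equiv.swap i j * σ)) = - phi R i j (Q σ) := by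
    intro σ i j hij
    have h1 : rename (Equiv.swap i j) (Q σ) = - Q (Equiv.swap i j * σ) := by
      apply mul_left_cancel₀ (den_ne (R := R) (Equiv.swap i j * σ))
      rw [mul_neg, ← hQ, den_swap, ← map_mul, ← hQ, DD_swap hij]
    have h2 : phi R i j (rename (Equiv.swap i j) (Q σ)) = phi R i j (Q σ) := by
      rw [phi, rename_rename]
      congr 2
      ext l
      simp only [Function.comp, mrg, Equiv.swap_apply_def]
      congr 1
      split_ifs <;> simp_all
    rw [← h2, h1, map_neg, neg_neg]
  have hQ1 : ∀ σ i j, i ≠ j → ¬ (Adj σ i j ∨ Adj σ j i) → phi R i j (Q σ) = 0 := by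
    intro σ i j hij hadj
    have h1 := (dvd_iff i j (DD n R)).1 (dvd_DD hij)
    rw [hQ σ, map_mul, mul_eq_zero] at h1
    refine h1.resolve_left ?_
    rw [den, map_prod, ← Ne, Finset.prod_ne_zero_iff]
    intro k _
    have hk := Finset.mem_range.1 k.2
    push Not at hadj
    apply phi_ne
    · simp
    · intro h
      exact hadj.1 ⟨k.1, by omega, h.1, h.2⟩
    · intro h
      exact hadj.2 ⟨k.1, by omega, h.1, h.2⟩
  have hdvd : DD n R ∣ ∑ σ, N σ * Q σ := by
    conv_lhs => rw [DD_eq]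
    apply Finset.prod_dvd_of_isRelPrime
    · rintro ⟨a, b⟩ hab ⟨c, d⟩ hcd hne
      simp at hab hcd hne
      apply relPrime hab.ne hcd.ne
      · rintro ⟨rfl, rfl⟩
        simp at hne
      · rintro ⟨rfl, rfl⟩
        exact lt_asymm hab hcd
    · rintro ⟨i, j⟩ hij
      simp at hij
      rw [dvd_iff, map_sum]
      refine Finset.sum_ninvolution (fun σ => Equiv.swap i j * σ) ?_ ?_ ?_ ?_
      · intro σ
        rw [map_mul, map_mul, hQs σ i j hij.ne]
        by_cases h : Adj σ i j ∨ Adj σ j i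
        · rw [hN σ i j hij.ne h]; ring
        · rw [hQ1 σ i j hij.ne h]; ring
      · intro σ _ h
        have h' : Equiv.swap i j = 1 := by simpa using h
        rw [Equiv.swap_eq_one_iff] at h'
        exact hij.ne h'
      · simp
      · intro σ; simp
  obtain ⟨p, hp⟩ := hdvd
  refine ⟨p, ?_, ?_⟩
  · intro i
    by_cases hp0 : p = 0
    · simp [hp0]
    have h1 : degreeOf i (DD n R * p) ≤ r + degreeOf i (DD n R) := by
      rw [← hp]
      refine (degreeOf_sum_le i _ _).trans (Finset.sup_le fun σ _ => ?_)
      refine (degreeOf_mul_le i _ _).trans ?_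
      rw [hQ σ, degreeOf_mul_eq (den_ne σ) (hQ0 σ)]
      have := hdeg σ i
      omega
    rw [degreeOf_mul_eq DD_ne hp0] at h1
    omega
  · have hinj := IsFractionRing.injective (MvPolynomial (Fin n) R) (FractionRing (MvPolynomial (Fin n) R))
    have hDD : algebraMap _ (FractionRing (MvPolynomial (Fin n) R)) (DD n R) ≠ 0 := by
      rw [Ne, map_eq_zero_iff _ hinj]; exact DD_ne
    apply mul_left_cancel₀ hDD
    rw [← map_mul, ← hp, map_sum, Finset.mul_sum]
    refine Finset.sum_congr rfl fun σ _ => ?_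
    have hd : algebraMap _ (FractionRing (MvPolynomial (Fin n) R)) (den R σ) ≠ 0 := by
      rw [Ne, map_eq_zero_iff _ hinj]; exact den_ne σ
    rw [hQ σ, map_mul, map_mul]
    field_simp
end alg
end FinkAux

namespace FinkAux
section comb
variable {n : ℕ}

lemma lex_list {α : Type*} [LinearOrder α] {l₁ l₂ : List α} (h : List.Lex (· < ·) l₁ l₂) :
    l₁.Pairwise (· < ·) → l₂.Pairwise (· < ·) → l₁.length = l₂.length →
    ∀ x ∈ l₂, x ∉ l₁ → (∀ y < x, (y ∈ l₁ ↔ y ∈ l₂)) → False := by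
  induction h with
  | nil => intro _ _ h; simp at h
  | @cons a l₁ l₂ h ih =>
    intro h1 h2 hl x hx2 hx1 hy
    rw [List.pairwise_cons] at h1 h2
    simp only [List.length_cons, add_left_inj] at hl
    simp only [List.mem_cons, not_or] at hx1 hx2
    refine ih h1.2 h2.2 hl x (hx2.resolve_left hx1.1) hx1.2 ?_
    intro y hyx
    have := hy y hyx
    simp only [List.mem_cons] at this
    by_cases hya : y = a
    · subst hya
      constructor
      · intro h; exact absurd (h1.1 _ h) (lt_irrefl _)
      · intro h; exact absurd (h2.1 _ h) (lt_irrefl _)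
    · simpa [hya] using this
  | @rel a l₁ b l₂ hab =>
    intro h1 h2 hl x hx2 hx1 hy
    rw [List.pairwise_cons] at h1 h2
    have hge : ∀ y ∈ b :: l₂, b ≤ y := by
      intro y hy
      rcases List.mem_cons.1 hy with rfl | hy
      · exact le_rfl
      · exact (h2.1 _ hy).le
    have h3 := (hy a (hab.trans_le (hge x hx2))).1 (by simp)
    exact absurd (hge a h3) (not_le.2 hab)

lemma not_lex {σ : Equiv.Perm (Fin n)} {B : Finset (Fin n)} {a b : Fin n} (ha : a ∈ B) (hb : b ∉ B)
    (hab : σ.symm b < σ.symm a) : ¬ lexLtPerm σ B (insert b (B.erase a)) := by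
  intro h
  refine lex_list h (Finset.sortedLT_sort _).pairwise (Finset.sortedLT_sort _).pairwise ?_ (σ.symm b) ?_ ?_ ?_
  · rw [Finset.length_sort, Finset.length_sort, Finset.card_image_of_injective _ σ.symm.injective,
      Finset.card_image_of_injective _ σ.symm.injective, Finset.card_insert_of_notMem (by simp [hb]),
      Finset.card_erase_add_one ha]
  · simp
  · simpa using hb
  · intro y hy
    have h1 : y ≠ σ.symm b := hy.ne
    have h2 : y ≠ σ.symm a := (hy.trans hab).ne
    simp only [Finset.mem_sort, Finset.mem_image]
    constructor
    · rintro ⟨c, hc, rfl⟩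
      exact ⟨c, by simp at h1 h2; simp [h1, h2, hc], rfl⟩
    · rintro ⟨c, hc, rfl⟩
      simp at h1 h2
      simp [h1, h2] at hc
      exact ⟨c, hc, rfl⟩

variable {K : Type*} [Field K] {d : ℕ}

lemma greedy (v : Fin n → (Fin d → K)) (σ : Equiv.Perm (Fin n)) (B : Finset (Fin n))
    (hcard : B.card = d) (hind : LinearIndepOn K v (B : Set (Fin n)))
    (hleast : ∀ B' : Finset (Fin n), B'.card = d → LinearIndepOn K v (B' : Set (Fin n)) →
      B = B' ∨ lexLtPerm σ B B') (e : Fin n) :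
    e ∈ B ↔ v e ∉ Submodule.span K (v '' {x | σ.symm x < σ.symm e}) := by
  have key : ∀ a ∈ B, ∀ b ∉ B, σ.symm b < σ.symm a →
      v b ∈ Submodule.span K (v '' ((B : Set (Fin n)) \ {a})) := by
    intro a ha b hb hab
    by_contra hcon
    have h1 : LinearIndepOn K v ((insert b (B.erase a) : Finset (Fin n)) : Set (Fin n)) := by
      rw [Finset.coe_insert, Finset.coe_erase]
      exact (hind.mono Set.sdiff_subset).insert hcon
    rcases hleast _ (by rw [Finset.card_insert_of_notMem (by simp [hb]),
      Finset.card_erase_add_one ha, hcard]) h1 with h | h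
    · apply hb
      rw [h]; simp
    · exact not_lex ha hb hab h
  constructor
  · intro he hcon
    refine hind.notMem_span he (Submodule.span_le.2 ?_ hcon)
    rintro _ ⟨x, hx', rfl⟩
    have hx : σ.symm x < σ.symm e := by simpa using hx'
    by_cases hxB : x ∈ B
    · apply Submodule.subset_span
      refine ⟨x, ⟨hxB, ?_⟩, rfl⟩
      rintro rfl
      exact lt_irrefl _ hx
    · exact key e he x hxB hx
  · intro hcon
    by_contra heB
    apply hcon
    have htop : Submodule.span K (v '' (B : Set (Fin n))) = ⊤ := by
      have := LinearIndependent.span_eq_top_of_card_eq_finrank' hind (by simp [hcard])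
      rw [← this]
      congr 1
      ext x; simp
    have hmem : v e ∈ Submodule.span K (v '' (B : Set (Fin n))) := by rw [htop]; trivial
    rw [Submodule.mem_span_image_finset_iff_exists_fun] at hmem
    obtain ⟨c', hc⟩ := hmem
    obtain ⟨c, hc'⟩ : ∃ c : Fin n → K, ∀ x : B, c x = c' x :=
      ⟨fun x => if h : x ∈ B then c' ⟨x, h⟩ else 0, fun x => by simp⟩
    simp only [← hc'] at hc
    rw [Finset.sum_coe_sort B (fun x => c x • v x)] at hc
    rw [← hc]
    refine Submodule.sum_mem _ fun a ha => ?_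
    by_cases hca : c a = 0
    · simp [hca]
    apply Submodule.smul_mem
    apply Submodule.subset_span
    refine ⟨a, ?_, rfl⟩
    by_contra hlt
    have hne : σ.symm e ≠ σ.symm a := by
      intro h; apply heB; rw [σ.symm.injective h]; exact ha
    have hlt' : σ.symm e < σ.symm a := lt_of_le_of_ne (not_lt.1 hlt) hne
    have hk := key a ha e heB hlt'
    apply hind.notMem_span ha
    rw [← Finset.add_sum_erase _ _ ha] at hc
    have h2 : v a = (c a)⁻¹ • (v e - ∑ x ∈ B.erase a, c x • v x) := by
      rw [← hc, add_sub_cancel_right, smul_smul, inv_mul_cancel₀ hca, one_smul]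
    rw [h2]
    refine Submodule.smul_mem _ _ (Submodule.sub_mem _ hk (Submodule.sum_mem _ fun x hx => ?_))
    apply Submodule.smul_mem
    apply Submodule.subset_span
    rw [Finset.mem_erase] at hx
    exact ⟨x, ⟨hx.2, hx.1⟩, rfl⟩

lemma swap_basis (v : Fin n → (Fin d → K)) (σ : Equiv.Perm (Fin n)) (A B : Finset (Fin n))
    (i j : Fin n) (hij : (σ.symm j).1 = (σ.symm i).1 + 1)
    (hA : ∀ e, e ∈ A ↔ v e ∉ Submodule.span K (v '' {x | σ.symm x < σ.symm e}))
    (hB : ∀ e, e ∈ B ↔ v e ∉ Submodule.span K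
      (v '' {x | (Equiv.swap i j * σ).symm x < (Equiv.swap i j * σ).symm e})) :
    B = A ∨ B = A.image (Equiv.swap i j) := by
  have hne : i ≠ j := by rintro rfl; omega
  have hs : ∀ x, (Equiv.swap i j * σ).symm x = σ.symm (Equiv.swap i j x) := by
    intro x; rfl
  have hval : ∀ x, x ≠ i → x ≠ j → (σ.symm x).1 ≠ (σ.symm i).1 ∧ (σ.symm x).1 ≠ (σ.symm j).1 := by
    intro x h1 h2
    exact ⟨fun h => h1 (σ.symm.injective (Fin.ext h)), fun h => h2 (σ.symm.injective (Fin.ext h))⟩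
  simp only [hs] at hB
  set P : Set (Fin n) := {x | σ.symm x < σ.symm i} with hP
  have hAi := hA i
  rw [← hP] at hAi
  have hAj := hA j
  have hBi := hB i
  have hBj := hB j
  rw [Equiv.swap_apply_left] at hBi
  rw [Equiv.swap_apply_right] at hBj
  have e1 : {x | σ.symm x < σ.symm j} = insert i P := by
    ext x
    simp only [hP, Set.mem_ofPred_eq, Set.mem_insert_iff, Fin.lt_def]
    by_cases h1 : x = i
    · subst h1; simp; omega
    by_cases h2 : x = j
    · subst h2; simp [h1]; omega
    have := hval x h1 h2
    simp only [h1, false_or]; omega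
  have e2 : {x | σ.symm (Equiv.swap i j x) < σ.symm i} = P := by
    ext x
    simp only [hP, Set.mem_ofPred_eq, Fin.lt_def]
    by_cases h1 : x = i
    · subst h1; simp; omega
    by_cases h2 : x = j
    · subst h2; simp; omega
    rw [Equiv.swap_apply_of_ne_of_ne h1 h2]
  have e3 : {x | σ.symm (Equiv.swap i j x) < σ.symm j} = insert j P := by
    ext x
    simp only [hP, Set.mem_ofPred_eq, Set.mem_insert_iff, Fin.lt_def]
    by_cases h1 : x = i
    · subst h1; simp [hne]
    by_cases h2 : x = j
    · subst h2; simp; omega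
    have := hval x h1 h2
    rw [Equiv.swap_apply_of_ne_of_ne h1 h2]
    simp only [h2, false_or]; omega
  have e4 : ∀ e, e ≠ i → e ≠ j → (e ∈ B ↔ e ∈ A) := by
    intro e h1 h2
    rw [hA, hB, Equiv.swap_apply_of_ne_of_ne h1 h2]
    have : {x | σ.symm (Equiv.swap i j x) < σ.symm e} = {x | σ.symm x < σ.symm e} := by
      have := hval e h1 h2
      ext x
      simp only [Set.mem_ofPred_eq, Fin.lt_def]
      by_cases h3 : x = i
      · subst h3; simp; omega
      by_cases h4 : x = j
      · subst h4; simp; omega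
      rw [Equiv.swap_apply_of_ne_of_ne h3 h4]
    rw [this]
  rw [e1, Set.image_insert_eq] at hAj
  rw [e3, Set.image_insert_eq] at hBi
  rw [e2] at hBj
  have mono : ∀ a b, v a ∈ Submodule.span K (v '' P) →
      v a ∈ Submodule.span K (insert (v b) (v '' P)) := fun a b h =>
    Submodule.span_mono (Set.subset_insert _ _) h
  have ins : ∀ a b, v a ∈ Submodule.span K (v '' P) →
      (v b ∈ Submodule.span K (insert (v a) (v '' P)) ↔ v b ∈ Submodule.span K (v '' P)) := by
    intro a b h
    rw [Submodule.span_insert_eq_span h]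
  have hm : ∀ x, x ∈ A.image (Equiv.swap i j) ↔ Equiv.swap i j x ∈ A := by
    intro x
    rw [Finset.mem_image]
    constructor
    · rintro ⟨y, hy, rfl⟩; simpa using hy
    · intro h; exact ⟨_, h, by simp⟩
  by_cases hi : v i ∈ Submodule.span K (v '' P)
  · left
    ext x
    by_cases h1 : x = i
    · subst h1; simp [hAi, hBi, hi, mono]
    by_cases h2 : x = j
    · subst h2; rw [hAj, hBj, ins i x hi]
    exact e4 x h1 h2
  by_cases hj : v j ∈ Submodule.span K (v '' P)
  · left
    ext x
    by_cases h1 : x = i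
    · subst h1; rw [hAi, hBi, ins j x hj]
    by_cases h2 : x = j
    · subst h2; simp [hAj, hBj, hj, mono]
    exact e4 x h1 h2
  right
  have hex : v i ∈ Submodule.span K (insert (v j) (v '' P)) ↔
      v j ∈ Submodule.span K (insert (v i) (v '' P)) :=
    ⟨fun h => mem_span_insert_exchange h hi, fun h => mem_span_insert_exchange h hj⟩
  ext x
  rw [hm]
  by_cases h1 : x = i
  · subst h1; rw [Equiv.swap_apply_left, hBi, hAj, hex]
  by_cases h2 : x = j
  · subst h2; rw [Equiv.swap_apply_right, hBj, hAi]; simp [hi, hj]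
  rw [Equiv.swap_apply_of_ne_of_ne h1 h2]
  exact e4 x h1 h2
end comb
end FinkAux

namespace FinkAux
open MvPolynomial

lemma aeval_F (r n : ℕ) (i : Fin n) : Polynomial.aeval (MvPolynomial.X i : Sring r n) (Fpoly r) =
    ∏ k : Fin (r + 1), (X i + C (X k)) := by
  rw [Fpoly, map_prod]
  refine Finset.prod_congr rfl fun k _ => ?_
  rw [map_add, Polynomial.aeval_X, Polynomial.aeval_C]
  rfl

lemma rename_F (r n : ℕ) (f : Fin n → Fin n) (i : Fin n) :
    rename f (Polynomial.aeval (MvPolynomial.X i : Sring r n) (Fpoly r)) =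
      Polynomial.aeval (MvPolynomial.X (f i) : Sring r n) (Fpoly r) := by
  rw [aeval_F, aeval_F, map_prod]
  refine Finset.prod_congr rfl fun k _ => ?_
  rw [map_add, rename_X, rename_C]

lemma deg_F (r n : ℕ) (i k : Fin n) :
    degreeOf i (Polynomial.aeval (MvPolynomial.X k : Sring r n) (Fpoly r)) ≤
      if k = i then r + 1 else 0 := by
  rw [aeval_F]
  refine (degreeOf_prod_le _ _ _).trans ?_
  refine (Finset.sum_le_card_nsmul _ _ (if k = i then 1 else 0) ?_).trans ?_
  · intro l _
    refine (degreeOf_add_le _ _ _).trans ?_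
    rw [degreeOf_X, degreeOf_C]
    split_ifs <;> simp_all
  · split_ifs <;> simp

lemma deg_N (r n : ℕ) (i : Fin n) (s : Finset (Fin n)) :
    degreeOf i (∏ k ∈ s, Polynomial.aeval (MvPolynomial.X k : Sring r n) (Fpoly r)) ≤ r + 1 := by
  refine (degreeOf_prod_le _ _ _).trans ((Finset.sum_le_sum fun k _ => deg_F r n i k).trans ?_)
  rw [Finset.sum_ite_eq']
  split_ifs <;> simp

lemma deg_sub {R : Type*} [CommRing R] [IsDomain R] {n : ℕ} {i j : Fin n} (h : i ≠ j) :
    1 ≤ degreeOf i (X i - X j : MvPolynomial (Fin n) R) := by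
  have := monomial_le_degreeOf i (f := (X i - X j : MvPolynomial (Fin n) R))
    (m := Finsupp.single i 1) (by
      rw [mem_support_iff, coeff_sub, coeff_X, coeff_X]
      have : Finsupp.single j 1 ≠ (Finsupp.single i 1 : Fin n →₀ ℕ) := by
        intro h'
        exact h (Finsupp.single_left_injective one_ne_zero h').symm
      simp [this])
  simpa using this

lemma deg_den {R : Type*} [CommRing R] [IsDomain R] {n : ℕ} (hn : 2 ≤ n) (σ : Equiv.Perm (Fin n))
    (i : Fin n) : 1 ≤ degreeOf i (den R σ) := by
  have key : ∀ q : MvPolynomial (Fin n) R, q ∣ den R σ → degreeOf i q ≤ degreeOf i (den R σ) := by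
    rintro q ⟨s, hs⟩
    have h0 := den_ne (R := R) σ
    rw [hs] at h0
    rw [hs, degreeOf_mul_eq (left_ne_zero_of_mul h0) (right_ne_zero_of_mul h0)]
    omega
  have fac : ∀ (k : ℕ) (hk : k + 1 < n),
      (X (σ ⟨k + 1, hk⟩) - X (σ ⟨k, by omega⟩) : MvPolynomial (Fin n) R) ∣ den R σ := by
    intro k hk
    have hmem : (⟨k, Finset.mem_range.2 (by omega)⟩ : {x // x ∈ Finset.range (n - 1)}) ∈
        (Finset.range (n - 1)).attach := Finset.mem_attach _ _
    rw [den, ← Finset.mul_prod_erase _ _ hmem]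
    exact Dvd.intro _ rfl
  obtain ⟨⟨m, hm⟩, rfl⟩ := σ.surjective i
  cases m with
  | zero =>
    have h1 := fac 0 (by omega)
    rw [← neg_sub, neg_dvd] at h1
    exact (deg_sub (by simp)).trans (key _ h1)
  | succ m => exact (deg_sub (by simp)).trans (key _ (fac m hm))

end FinkAux

/-- Polynomiality and degree bound of the Fink-type formula: the sum over permutations
`σ` of `(∏_{i ∉ B(σ)} F(zᵢ)) / ∏_{k=1}^{n-1} (z_{σ(k+1)} − z_{σ(k)})`, where `B(σ)` is
the `≺_σ`-lexicographically first column basis of `M`, lies in `R[z₁,…,zₙ]` and has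
degree at most `r` in each variable `zᵢ`. -/
theorem fink_formula_is_polynomial {K : Type*} [Field K] {d n : ℕ} (hn : 0 < n)
    (M : Matrix (Fin d) (Fin n) K) (hM : M.rank = d)
    (hcols : ∀ i : Fin n, (fun j => M j i) ≠ 0)
    (r : ℕ)
    (B : Equiv.Perm (Fin n) → Finset (Fin n))
    (hBcard : ∀ σ, (B σ).card = d)
    (hBind : ∀ σ, LinearIndependent K (fun i : (B σ) => M.transpose (i : Fin n)))
    (hBleast : ∀ σ, ∀ B' : Finset (Fin n), B'.card = d →
      LinearIndependent K (fun i : B' => M.transpose (i : Fin n)) →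
      B σ = B' ∨ lexLtPerm σ (B σ) B') :
    ∃ p : Sring r n, (∀ i : Fin n, p.degreeOf i ≤ r) ∧
      algebraMap (Sring r n) (FractionRing (Sring r n)) p =
        ∑ σ : Equiv.Perm (Fin n),
          (algebraMap (Sring r n) (FractionRing (Sring r n))
              (∏ i ∈ (B σ)ᶜ, Polynomial.aeval (MvPolynomial.X i : Sring r n) (Fpoly r))) *
            (algebraMap (Sring r n) (FractionRing (Sring r n))
              (∏ k ∈ (Finset.range (n - 1)).attach,
                (MvPolynomial.X (σ ⟨k.1 + 1, by
                    have := Finset.mem_range.mp k.2; omega⟩) -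
                  MvPolynomial.X (σ ⟨k.1, by
                    have := Finset.mem_range.mp k.2; omega⟩) : Sring r n)))⁻¹ := by
  classical
  have hgr : ∀ σ e, e ∈ B σ ↔ M.transpose e ∉
      Submodule.span K (M.transpose '' {x | σ.symm x < σ.symm e}) := fun σ e =>
    FinkAux.greedy M.transpose σ (B σ) (hBcard σ) (hBind σ) (fun B' h1 h2 => hBleast σ B' h1 h2) e
  have hsw : ∀ σ i j, FinkAux.Adj σ i j →
      B (Equiv.swap i j * σ) = B σ ∨ B (Equiv.swap i j * σ) = (B σ).image (Equiv.swap i j) := by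
    rintro σ i j ⟨k, hk, rfl, rfl⟩
    exact FinkAux.swap_basis M.transpose σ _ _ _ _ (by simp) (hgr σ) (hgr _)
  refine FinkAux.main_alg (R := Rring r) (fun σ =>
    ∏ i ∈ (B σ)ᶜ, Polynomial.aeval (MvPolynomial.X i : Sring r n) (Fpoly r)) r ?_ ?_
  · intro σ i j hij hadj
    have h : B (Equiv.swap i j * σ) = B σ ∨
        B (Equiv.swap i j * σ) = (B σ).image (Equiv.swap i j) := by
      rcases hadj with h | h
      · exact hsw σ i j h
      · rw [Equiv.swap_comm]
        exact hsw σ j i h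
    rcases h with h | h
    · simp only [h]
    · have hc : ((B σ).image (Equiv.swap i j))ᶜ = (B σ)ᶜ.image (Equiv.swap i j) := by
        ext x
        simp only [Finset.mem_compl, Finset.mem_image]
        constructor
        · intro hx
          exact ⟨Equiv.swap i j x, fun hy => hx ⟨_, hy, by simp⟩, by simp⟩
        · rintro ⟨y, hy, rfl⟩ ⟨z, hz, hzy⟩
          exact hy ((Equiv.swap i j).injective hzy ▸ hz)
      simp only [h, hc]
      rw [Finset.prod_image (fun a _ b _ hab => (Equiv.swap i j).injective hab), map_prod, map_prod]
      refine Finset.prod_congr rfl fun k _ => ?_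
      rw [FinkAux.rename_F, FinkAux.rename_F]
      congr 2
      simp only [FinkAux.mrg, Equiv.swap_apply_def]
      split_ifs <;> simp_all
  · intro σ i
    by_cases h2 : 2 ≤ n
    · have h3 := FinkAux.deg_den (R := Rring r) h2 σ i
      have h4 := FinkAux.deg_N r n i (B σ)ᶜ
      exact h4.trans (by omega)
    · have hn1 : n = 1 := by omega
      subst hn1
      have hd : d ≠ 0 := by
        rintro rfl
        exact hcols 0 (Subsingleton.elim _ _)
      have hB : B σ = Finset.univ := by
        have h1 := hBcard σ
        have h5 := Finset.card_le_univ (B σ)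
        apply Finset.eq_univ_of_card
        simp only [Fintype.card_fin] at h5 ⊢
        omega
      simp only [hB, Finset.compl_univ, Finset.prod_empty]
      rw [MvPolynomial.degreeOf_one]
      exact Nat.zero_le _
end
end
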